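/- For every integer $d \geq 1$, every $s \in \mathbb{R}$ and every $n \in \mathbb{N}$, the Fourier transform of the Schwartz function $g_n \cdot \partial_{x_1} f_n$ (with the convention $\hat{f}(\xi) = \int_{\mathbb{R}^d} f(x) e^{-i x \cdot \xi}\, dx$) is supported in the annulus $\{\xi \in \mathbb{R}^d : \tfrac{17}{12} 2^n - 1 \leq |\xi| \leq \tfrac{17}{12} 2^n + 1\}$, where $|\xi|$ denotes the Euclidean norm. -/

import Mathlib

open MeasureTheory
open scoped RealInnerProductSpace

/-- The Fourier transform on `ℝ` with the convention `f̂(ξ) = ∫ f(x) e^{-i x ξ} dx`. -/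
noncomputable def fourierTransform1 (f : ℝ → ℝ) (ξ : ℝ) : ℂ :=
  ∫ x : ℝ, (f x : ℂ) * Complex.exp (-Complex.I * (x : ℂ) * (ξ : ℂ))

/-- The Fourier transform on `ℝ^d` with the convention `f̂(ξ) = ∫ f(x) e^{-i x·ξ} dx`. -/
noncomputable def fourierTransformD {d : ℕ} (f : EuclideanSpace ℝ (Fin d) → ℝ)
    (ξ : EuclideanSpace ℝ (Fin d)) : ℂ :=
  ∫ x : EuclideanSpace ℝ (Fin d),
    (f x : ℂ) * Complex.exp (-Complex.I * ((⟪x, ξ⟫ : ℝ) : ℂ))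

/-- The profile `f_n(x) = 2^{-ns} φ(x₁) sin((17/12) 2^n x₁) φ(x₂) ⋯ φ(x_d)`. -/
noncomputable def fprof (d : ℕ) (hd : 0 < d) (φ : ℝ → ℝ) (s : ℝ) (n : ℕ)
    (x : EuclideanSpace ℝ (Fin d)) : ℝ :=
  (2 : ℝ) ^ (-(n : ℝ) * s) * φ (x ⟨0, hd⟩) * Real.sin (17 / 12 * 2 ^ n * x ⟨0, hd⟩) *
    ∏ i ∈ Finset.univ.filter (fun i : Fin d => i ≠ ⟨0, hd⟩), φ (x i)

/-- The profile `g_n(x) = 2^{-n} φ(x₁) φ(x₂) ⋯ φ(x_d)`. -/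
noncomputable def gprof (d : ℕ) (φ : ℝ → ℝ) (n : ℕ)
    (x : EuclideanSpace ℝ (Fin d)) : ℝ :=
  (2 : ℝ) ^ (-(n : ℝ)) * ∏ i : Fin d, φ (x i)

/-- The partial derivative in the first coordinate. -/
noncomputable def pderivOne (d : ℕ) (hd : 0 < d) (f : EuclideanSpace ℝ (Fin d) → ℝ)
    (x : EuclideanSpace ℝ (Fin d)) : ℝ :=
  fderiv ℝ f x (EuclideanSpace.single ⟨0, hd⟩ 1)

/-! The Fourier transform of a product is a convolution, so frequency supports add under
multiplication; differentiation does not enlarge them, and multiplication by `sin (a x)` shifts them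
by `±a`. Since `g_n ∂₁ f_n` is a tensor product of functions of one variable, its Fourier transform
factors. If `R` bounds the frequencies of `φ`, a frequency of `g_n ∂₁ f_n` therefore differs from
`(±(17/12) 2^n, 0, …, 0)` by at most `2R` in every coordinate, hence by at most `2R√d` in norm, and
`R = 2^{-d}` is small enough to make this at most `1`. -/

open Complex Function Set Metric Convolution FourierTransform
open scoped Pointwise Real

section FourierMul

variable {V E : Type*} [NormedAddCommGroup V] [InnerProductSpace ℝ V] [FiniteDimensional ℝ V]
  [MeasurableSpace V] [BorelSpace V] [NormedAddCommGroup E] [NormedSpace ℂ E]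

lemma fourier_fourierChar_smul (g : V → E) (ξ η : V) :
    𝓕 (fun x ↦ Real.fourierChar (-⟪x, ξ⟫) • g x) η = 𝓕 g (η + ξ) := by
  simp only [Real.fourier_eq, smul_smul, ← AddChar.map_add_eq_mul, inner_add_right, neg_add]

theorem fourier_smul_eq_convolution [CompleteSpace E] {f : V → ℂ} {g : V → E} (hf : Continuous f)
    (hf_int : Integrable f) (hf_fourier : Integrable (𝓕 f)) (hg : Integrable g) :
    𝓕 (fun x ↦ f x • g x) = 𝓕 f ⋆[ContinuousLinearMap.lsmul ℂ ℂ] 𝓕 g := by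
  ext ξ
  have hf_inv_int : Integrable (𝓕⁻ f) := by
    simpa only [← Real.fourierInv_eq_fourier_neg] using hf_fourier.comp_neg
  have hg_mod : Integrable (fun x ↦ Real.fourierChar (-⟪x, ξ⟫) • g x) :=
    (Real.fourierIntegral_convergent_iff ξ).2 hg
  calc 𝓕 (fun x ↦ f x • g x) ξ
      = ∫ x, 𝓕 (𝓕⁻ f) x • Real.fourierChar (-⟪x, ξ⟫) • g x := by
        rw [hf.fourier_fourierInv_eq hf_int hf_fourier]
        simp only [Real.fourier_eq, smul_comm (f _)]
    _ = ∫ x, 𝓕⁻ f x • 𝓕 (fun y ↦ Real.fourierChar (-⟪y, ξ⟫) • g y) x := by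
        simpa using! VectorFourier.integral_fourierIntegral_smul_eq_flip (L := innerₗ V)
          Real.continuous_fourierChar continuous_inner hf_inv_int hg_mod
    _ = ∫ x, 𝓕 f (-x) • 𝓕 g (ξ - -x) := by
        simp only [fourier_fourierChar_smul, Real.fourierInv_eq_fourier_neg, sub_neg_eq_add,
          add_comm ξ]
    _ = ∫ x, 𝓕 f x • 𝓕 g (ξ - x) := integral_neg_eq_self (fun x ↦ 𝓕 f x • 𝓕 g (ξ - x)) volume

end FourierMul

section OneDimensional

variable {f g : ℝ → ℝ}

lemma fourierTransform1_eq_fourier (f : ℝ → ℝ) (ξ : ℝ) :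
    fourierTransform1 f ξ = 𝓕 (fun x ↦ (f x : ℂ)) (ξ / (2 * π)) := by
  rw [fourierTransform1, Real.fourier_real_eq_integral_exp_smul]
  congr! 2 with x
  rw [smul_eq_mul, mul_comm]
  congr 2
  push_cast
  field_simp

lemma fourier_ofReal_eq (f : ℝ → ℝ) (ξ : ℝ) :
    𝓕 (fun x ↦ (f x : ℂ)) ξ = fourierTransform1 f (2 * π * ξ) := by
  rw [fourierTransform1_eq_fourier, mul_div_cancel_left₀ _ Real.two_pi_pos.ne']

lemma continuous_fourierTransform1 (hf : Integrable f) : Continuous (fourierTransform1 f) := by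
  have : Continuous (𝓕 fun x ↦ (f x : ℂ)) :=
    VectorFourier.fourierIntegral_continuous Real.continuous_fourierChar
      continuous_inner hf.ofReal
  rw [funext (fourierTransform1_eq_fourier f)]
  exact this.comp (continuous_id.div_const (2 * π))

lemma integrable_fourierTransform1_of_support_subset_ball {R : ℝ} (hf : Integrable f)
    (hR : support (fourierTransform1 f) ⊆ ball 0 R) : Integrable (fourierTransform1 f) :=
  (continuous_fourierTransform1 hf).integrable_of_hasCompactSupport <|
    .of_support_subset_isCompact (isCompact_closedBall 0 R) (hR.trans ball_subset_closedBall)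

theorem support_fourierTransform1_mul_subset (hf : Continuous f) (hf_int : Integrable f)
    (hf_fourier : Integrable (fourierTransform1 f)) (hg : Integrable g) :
    support (fourierTransform1 fun x ↦ f x * g x) ⊆
      support (fourierTransform1 f) + support (fourierTransform1 g) := by
  intro ξ hξ
  have hf_fourier' : Integrable (𝓕 fun x ↦ (f x : ℂ)) := by
    simpa only [← fourier_ofReal_eq] using hf_fourier.comp_mul_left' Real.two_pi_pos.ne'
  have hconv : 𝓕 (fun x ↦ ((f x * g x : ℝ) : ℂ)) =
      𝓕 (fun x ↦ (f x : ℂ)) ⋆[ContinuousLinearMap.lsmul ℂ ℂ] 𝓕 (fun x ↦ (g x : ℂ)) := by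
    simpa only [ofReal_mul, smul_eq_mul] using fourier_smul_eq_convolution
      (f := fun x ↦ (f x : ℂ)) (g := fun x ↦ (g x : ℂ)) (by fun_prop) hf_int.ofReal hf_fourier'
      hg.ofReal
  rw [mem_support, fourierTransform1_eq_fourier, hconv] at hξ
  obtain ⟨u, hu, v, hv, huv⟩ := support_convolution_subset _ hξ
  rw [mem_support, fourier_ofReal_eq] at hu hv
  refine ⟨2 * π * u, hu, 2 * π * v, hv, ?_⟩
  calc 2 * π * u + 2 * π * v = 2 * π * (ξ / (2 * π)) := by rw [← mul_add, ← huv]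
    _ = ξ := mul_div_cancel₀ _ Real.two_pi_pos.ne'

theorem support_fourierTransform1_deriv_subset (hf : Differentiable ℝ f) (hf_int : Integrable f)
    (hf_deriv : Integrable (deriv f)) :
    support (fourierTransform1 (deriv f)) ⊆ support (fourierTransform1 f) := by
  have hderiv : deriv (fun x ↦ (f x : ℂ)) = fun x ↦ ((deriv f x : ℝ) : ℂ) :=
    funext fun x ↦ (hf x).hasDerivAt.ofReal_comp.deriv
  intro ξ hξ
  rw [mem_support, fourierTransform1_eq_fourier, ← hderiv,
    Real.fourier_deriv hf_int.ofReal (fun x ↦ (hf x).hasDerivAt.ofReal_comp.differentiableAt)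
      (hderiv ▸ hf_deriv.ofReal)] at hξ
  rw [mem_support, fourierTransform1_eq_fourier]
  exact right_ne_zero_of_smul hξ

lemma fourierTransform1_mul_sin (hf : Integrable f) (a ξ : ℝ) :
    fourierTransform1 (fun x ↦ f x * Real.sin (a * x)) ξ =
      I / 2 * (fourierTransform1 f (ξ + a) - fourierTransform1 f (ξ - a)) := by
  have hint (η : ℝ) : Integrable fun x : ℝ ↦ (f x : ℂ) * exp (-I * x * η) := by
    refine hf.ofReal.mul_bdd (c := 1) (by fun_prop) (.of_forall fun x ↦ ?_)
    simp [norm_exp]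
  have hadd (x : ℝ) : exp (-I * x * (ξ + a : ℝ)) = exp (-(a * x) * I) * exp (-I * x * ξ) := by
    rw [← exp_add]; congr 1; push_cast; ring
  have hsub (x : ℝ) : exp (-I * x * (ξ - a : ℝ)) = exp (a * x * I) * exp (-I * x * ξ) := by
    rw [← exp_add]; congr 1; push_cast; ring
  unfold fourierTransform1
  rw [← integral_sub (hint _) (hint _), ← integral_const_mul]
  congr! 2
  rw [hadd, hsub]
  push_cast
  rw [Complex.sin]
  ring

theorem support_fourierTransform1_mul_sin_subset (hf : Integrable f) (a : ℝ) :
    support (fourierTransform1 fun x ↦ f x * Real.sin (a * x)) ⊆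
      {a, -a} + support (fourierTransform1 f) := by
  intro ξ hξ
  rw [mem_support, fourierTransform1_mul_sin hf] at hξ
  rcases eq_or_ne (fourierTransform1 f (ξ - a)) 0 with h | h
  · exact ⟨-a, by simp, ξ + a, fun h' ↦ hξ (by simp [h, h']), by ring⟩
  · exact ⟨a, by simp, ξ - a, h, by ring⟩

lemma hasDerivAt_mul_sin (hf : Differentiable ℝ f) (a x : ℝ) :
    HasDerivAt (fun t ↦ f t * Real.sin (a * t))
      (deriv f x * Real.sin (a * x) + f x * (a * Real.cos (a * x))) x := by
  have hsin := ((hasDerivAt_id x).const_mul a).sin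
  simpa [mul_comm, funext_iff] using! (hf x).hasDerivAt.mul hsin

lemma integrable_mul_sin (hf : Integrable f) (a : ℝ) :
    Integrable fun t ↦ f t * Real.sin (a * t) :=
  hf.mul_bdd (c := 1) (by fun_prop) (.of_forall fun x ↦ Real.abs_sin_le_one _)

lemma integrable_deriv_mul_sin (hf : Differentiable ℝ f) (hf_int : Integrable f)
    (hf_deriv : Integrable (deriv f)) (a : ℝ) :
    Integrable (deriv fun t ↦ f t * Real.sin (a * t)) := by
  have hcos : Integrable fun t ↦ f t * (a * Real.cos (a * t)) := by
    refine hf_int.mul_bdd (c := |a|) (by fun_prop) (.of_forall fun x ↦ ?_)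
    simpa [abs_mul] using mul_le_of_le_one_right (abs_nonneg a) (Real.abs_cos_le_one (a * x))
  rw [funext fun x ↦ (hasDerivAt_mul_sin hf a x).deriv]
  exact (integrable_mul_sin hf_deriv a).add hcos

end OneDimensional

section BandLimited

lemma ball_zero_add_ball_zero_subset {E : Type*} [SeminormedAddCommGroup E] (r s : ℝ) :
    ball (0 : E) r + ball 0 s ⊆ ball 0 (r + s) := by
  rintro _ ⟨u, hu, v, hv, rfl⟩
  rw [mem_ball_zero_iff] at hu hv ⊢
  exact (norm_add_le u v).trans_lt (add_lt_add hu hv)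

variable {φ : ℝ → ℝ} {R : ℝ}

lemma support_fourierTransform1_mul_self_subset (hφ : Continuous φ) (hφ_int : Integrable φ)
    (hR : support (fourierTransform1 φ) ⊆ ball 0 R) :
    support (fourierTransform1 fun x ↦ φ x * φ x) ⊆ ball 0 (R + R) :=
  calc support (fourierTransform1 fun x ↦ φ x * φ x)
    _ ⊆ support (fourierTransform1 φ) + support (fourierTransform1 φ) :=
        support_fourierTransform1_mul_subset hφ hφ_int
          (integrable_fourierTransform1_of_support_subset_ball hφ_int hR) hφ_int
    _ ⊆ ball 0 R + ball 0 R := add_subset_add hR hR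
    _ ⊆ ball 0 (R + R) := ball_zero_add_ball_zero_subset R R

lemma support_fourierTransform1_mul_deriv_mul_sin_subset (hφ : Differentiable ℝ φ)
    (hφ_int : Integrable φ) (hφ_deriv : Integrable (deriv φ))
    (hR : support (fourierTransform1 φ) ⊆ ball 0 R) (a : ℝ) :
    support (fourierTransform1 fun x ↦ φ x * deriv (fun t ↦ φ t * Real.sin (a * t)) x) ⊆
      {a, -a} + ball 0 (R + R) := by
  have hsin : support (fourierTransform1 (deriv fun t ↦ φ t * Real.sin (a * t))) ⊆
      {a, -a} + support (fourierTransform1 φ) :=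
    (support_fourierTransform1_deriv_subset
      (fun x ↦ (hasDerivAt_mul_sin hφ a x).differentiableAt) (integrable_mul_sin hφ_int a)
      (integrable_deriv_mul_sin hφ hφ_int hφ_deriv a)).trans
      (support_fourierTransform1_mul_sin_subset hφ_int a)
  calc support (fourierTransform1 fun x ↦ φ x * deriv (fun t ↦ φ t * Real.sin (a * t)) x)
    _ ⊆ support (fourierTransform1 φ) +
          support (fourierTransform1 (deriv fun t ↦ φ t * Real.sin (a * t))) :=
        support_fourierTransform1_mul_subset hφ.continuous hφ_int
          (integrable_fourierTransform1_of_support_subset_ball hφ_int hR)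
          (integrable_deriv_mul_sin hφ hφ_int hφ_deriv a)
    _ ⊆ ball 0 R + ({a, -a} + ball 0 R) :=
        add_subset_add hR (hsin.trans (add_subset_add_left hR))
    _ = {a, -a} + (ball 0 R + ball 0 R) := add_left_comm _ _ _
    _ ⊆ {a, -a} + ball 0 (R + R) := add_subset_add_left (ball_zero_add_ball_zero_subset R R)

end BandLimited

section TensorProduct

variable {d : ℕ}

/-- The tensor product `x ↦ h₀(x₀) ⋯ h_{d-1}(x_{d-1})` of functions of one variable, as a function
on Euclidean space. Up to a constant, `f_n`, `g_n` and `g_n ∂₁ f_n` have this form, for which the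
Fourier transform factors. -/
def tensorProd (h : Fin d → ℝ → ℝ) (x : EuclideanSpace ℝ (Fin d)) : ℝ :=
  ∏ i, h i (x i)

lemma tensorProd_mul_tensorProd (h k : Fin d → ℝ → ℝ) (x : EuclideanSpace ℝ (Fin d)) :
    tensorProd h x * tensorProd k x = tensorProd (fun i t ↦ h i t * k i t) x :=
  Finset.prod_mul_distrib.symm

lemma tensorProd_update (h : Fin d → ℝ → ℝ) (j : Fin d) (k : ℝ → ℝ)
    (x : EuclideanSpace ℝ (Fin d)) :
    tensorProd (update h j k) x = k (x j) * ∏ i ∈ Finset.univ.erase j, h i (x i) := by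
  rw [tensorProd, ← Finset.mul_prod_erase _ _ (Finset.mem_univ j), update_self]
  congr 1
  exact Finset.prod_congr rfl fun i hi ↦ by rw [update_of_ne (Finset.ne_of_mem_erase hi)]

lemma differentiable_tensorProd {h : Fin d → ℝ → ℝ} (hh : ∀ i, Differentiable ℝ (h i)) :
    Differentiable ℝ (tensorProd h) := by
  have (i : Fin d) : Differentiable ℝ fun x : EuclideanSpace ℝ (Fin d) ↦ h i (x i) :=
    (hh i).comp (by fun_prop)
  unfold tensorProd
  fun_prop

lemma fderiv_tensorProd_single {h : Fin d → ℝ → ℝ} (hh : ∀ i, Differentiable ℝ (h i)) (j : Fin d)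
    (x : EuclideanSpace ℝ (Fin d)) :
    fderiv ℝ (tensorProd h) x (EuclideanSpace.single j 1) =
      tensorProd (update h j (deriv (h j))) x := by
  let proj (i : Fin d) : EuclideanSpace ℝ (Fin d) →L[ℝ] ℝ := EuclideanSpace.proj i
  have hcoord (i : Fin d) : HasFDerivAt (fun y : EuclideanSpace ℝ (Fin d) ↦ h i (y i))
      (deriv (h i) (x i) • proj i) x :=
    (hh i (x i)).hasDerivAt.comp_hasFDerivAt x (proj i).hasFDerivAt
  have hprod : HasFDerivAt (tensorProd h)
      (∑ i, (∏ k ∈ Finset.univ.erase i, h k (x k)) • deriv (h i) (x i) • proj i) x :=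
    .finsetProd fun i _ ↦ hcoord i
  rw [tensorProd_update, hprod.fderiv]
  simp [proj, mul_comm]

lemma fourierTransformD_const_mul (c : ℝ) (f : EuclideanSpace ℝ (Fin d) → ℝ)
    (ξ : EuclideanSpace ℝ (Fin d)) :
    fourierTransformD (fun x ↦ c * f x) ξ = c * fourierTransformD f ξ := by
  simp only [fourierTransformD, ofReal_mul, mul_assoc, integral_const_mul]

theorem fourierTransformD_tensorProd (h : Fin d → ℝ → ℝ) (ξ : EuclideanSpace ℝ (Fin d)) :
    fourierTransformD (tensorProd h) ξ = ∏ i, fourierTransform1 (h i) (ξ i) := by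
  simp only [fourierTransformD, fourierTransform1]
  rw [← integral_fintype_prod_volume_eq_prod
      (fun i (t : ℝ) ↦ (h i t : ℂ) * exp (-I * (t : ℂ) * (ξ i : ℂ))),
    ← (EuclideanSpace.volume_preserving_symm_measurableEquiv_toLp (Fin d)).integral_comp
      (MeasurableEquiv.measurableEmbedding _)]
  congr! 2
  rw [Finset.prod_mul_distrib, ← exp_sum, tensorProd, ofReal_prod]
  congr 2
  simp [PiLp.inner_apply, Finset.mul_sum, mul_comm, mul_left_comm]

end TensorProduct

section Profiles

variable {d : ℕ} (hd : 0 < d) (s : ℝ) (n : ℕ)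

lemma fprof_eq_tensorProd (φ : ℝ → ℝ) :
    fprof d hd φ s n = fun x ↦ (2 : ℝ) ^ (-(n : ℝ) * s) * tensorProd
      (update (fun _ ↦ φ) ⟨0, hd⟩ fun t ↦ φ t * Real.sin (17 / 12 * 2 ^ n * t)) x := by
  ext x
  rw [fprof, tensorProd_update, Finset.filter_ne']
  ring

lemma pderivOne_fprof {φ : ℝ → ℝ} (hφ : Differentiable ℝ φ) (x : EuclideanSpace ℝ (Fin d)) :
    pderivOne d hd (fprof d hd φ s n) x = (2 : ℝ) ^ (-(n : ℝ) * s) * tensorProd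
      (update (fun _ ↦ φ) ⟨0, hd⟩ (deriv fun t ↦ φ t * Real.sin (17 / 12 * 2 ^ n * t))) x := by
  have hdiff (i : Fin d) : Differentiable ℝ
      (update (fun _ ↦ φ) ⟨0, hd⟩ (fun t ↦ φ t * Real.sin (17 / 12 * 2 ^ n * t)) i) := by
    rcases eq_or_ne i ⟨0, hd⟩ with rfl | hi
    · rw [update_self]
      fun_prop
    · rwa [update_of_ne hi]
  rw [pderivOne, fprof_eq_tensorProd, fderiv_const_mul (differentiable_tensorProd hdiff x),
    smul_apply, fderiv_tensorProd_single hdiff, update_idem, update_self, smul_eq_mul]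

lemma gprof_mul_pderivOne_fprof {φ : ℝ → ℝ} (hφ : Differentiable ℝ φ)
    (x : EuclideanSpace ℝ (Fin d)) :
    gprof d φ n x * pderivOne d hd (fprof d hd φ s n) x =
      ((2 : ℝ) ^ (-(n : ℝ)) * (2 : ℝ) ^ (-(n : ℝ) * s)) * tensorProd
        (fun i t ↦ φ t * update (fun _ ↦ φ) ⟨0, hd⟩
          (deriv fun t ↦ φ t * Real.sin (17 / 12 * 2 ^ n * t)) i t) x := by
  rw [pderivOne_fprof hd s n hφ, ← tensorProd_mul_tensorProd]
  exact mul_mul_mul_comm _ _ _ _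

end Profiles

section Annulus

variable {ι : Type*} [Fintype ι] {r : ℝ}

lemma norm_le_sqrt_card_mul {x : EuclideanSpace ℝ ι} (hr : 0 ≤ r) (h : ∀ i, |x i| ≤ r) :
    ‖x‖ ≤ √(Fintype.card ι) * r :=
  calc ‖x‖ = √(∑ i, |x i| ^ 2) := EuclideanSpace.norm_eq x
    _ ≤ √(∑ _i : ι, r ^ 2) := by gcongr with i; exact h i
    _ = √(Fintype.card ι) * r := by simp [Real.sqrt_sq hr]

lemma abs_norm_sub_norm_le_of_forall_abs_sub_single_le [DecidableEq ι] {ξ : EuclideanSpace ℝ ι}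
    {j : ι} {b : ℝ} (h : ∀ i, |(ξ - EuclideanSpace.single j b) i| ≤ r) :
    |‖ξ‖ - ‖b‖| ≤ √(Fintype.card ι) * r :=
  calc |‖ξ‖ - ‖b‖| = |‖ξ‖ - ‖(EuclideanSpace.single j b : EuclideanSpace ℝ ι)‖| := by simp
    _ ≤ ‖ξ - EuclideanSpace.single j b‖ := abs_norm_sub_norm_le _ _
    _ ≤ √(Fintype.card ι) * r := norm_le_sqrt_card_mul ((abs_nonneg _).trans (h j)) h

lemma two_mul_sqrt_le_two_pow (d : ℕ) : 2 * √d ≤ 2 ^ d :=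
  -- AM-GM applied to `1` and `d`
  calc 2 * √d ≤ d + 1 := by nlinarith [Real.sq_sqrt d.cast_nonneg, sq_nonneg (√d - 1)]
    _ ≤ 2 ^ d := mod_cast Nat.lt_two_pow_self

end Annulus

theorem gprof_mul_pderiv_fprof_fourier_support_general (d : ℕ) (hd : 0 < d) {φ : ℝ → ℝ} {R : ℝ}
    (hφ : Differentiable ℝ φ) (hφ_int : Integrable φ) (hφ_deriv : Integrable (deriv φ))
    (hR : support (fourierTransform1 φ) ⊆ ball 0 R) (s : ℝ) (n : ℕ) :
    support (fourierTransformD fun x ↦ gprof d φ n x * pderivOne d hd (fprof d hd φ s n) x) ⊆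
      {ξ : EuclideanSpace ℝ (Fin d) | |‖ξ‖ - 17 / 12 * 2 ^ n| ≤ √d * (R + R)} := by
  intro ξ hξ
  simp only [mem_support, gprof_mul_pderivOne_fprof hd s n hφ, fourierTransformD_const_mul,
    fourierTransformD_tensorProd] at hξ
  have hcoord (i : Fin d) : fourierTransform1 (fun t ↦ φ t * update (fun _ ↦ φ) ⟨0, hd⟩
      (deriv fun t ↦ φ t * Real.sin (17 / 12 * 2 ^ n * t)) i t) (ξ i) ≠ 0 :=
    Finset.prod_ne_zero_iff.1 (right_ne_zero_of_mul hξ) i (Finset.mem_univ i)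
  obtain ⟨b, hb, v, hv, hbv⟩ := support_fourierTransform1_mul_deriv_mul_sin_subset hφ hφ_int
    hφ_deriv hR (17 / 12 * 2 ^ n) (by simpa using hcoord ⟨0, hd⟩)
  have hbox (i : Fin d) : |(ξ - EuclideanSpace.single (⟨0, hd⟩ : Fin d) b) i| ≤ R + R := by
    rcases eq_or_ne i ⟨0, hd⟩ with rfl | hi
    · simpa [← hbv] using (mem_ball_zero_iff.1 hv).le
    · have := support_fourierTransform1_mul_self_subset hφ.continuous hφ_int hR
        (by simpa [hi] using hcoord i)
      simpa [hi] using (mem_ball_zero_iff.1 this).le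
  have hb_norm : ‖b‖ = 17 / 12 * 2 ^ n := by
    rcases hb with rfl | rfl <;> simp
  simpa only [hb_norm, Fintype.card_fin] using!
    abs_norm_sub_norm_le_of_forall_abs_sub_single_le hbox

/-- The Fourier transform of `g_n ∂₁ f_n` is supported in the annulus
`(17/12) 2^n - 1 ≤ |ξ| ≤ (17/12) 2^n + 1`. -/
theorem gprof_mul_pderiv_fprof_fourier_support (d : ℕ) (hd : 1 ≤ d) (φ : SchwartzMap ℝ ℝ)
    (hφ1 : ∀ ξ : ℝ, |ξ| ≤ (4 : ℝ) ^ (-(d : ℤ)) → fourierTransform1 (fun x => φ x) ξ = 1)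
    (hφ0 : ∀ ξ : ℝ, (2 : ℝ) ^ (-(d : ℤ)) ≤ |ξ| → fourierTransform1 (fun x => φ x) ξ = 0)
    (s : ℝ) (n : ℕ) :
    Function.support (fourierTransformD (fun x =>
        gprof d (fun y => φ y) n x * pderivOne d hd (fprof d hd (fun y => φ y) s n) x)) ⊆
      {ξ : EuclideanSpace ℝ (Fin d) |
        17 / 12 * 2 ^ n - 1 ≤ ‖ξ‖ ∧ ‖ξ‖ ≤ 17 / 12 * 2 ^ n + 1} := by
  have hball : support (fourierTransform1 φ) ⊆ ball 0 ((2 : ℝ) ^ (-(d : ℤ))) := fun ξ hξ ↦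
    mem_ball_zero_iff.2 (lt_of_not_ge fun h ↦ hξ (hφ0 ξ h))
  have hradius : √d * ((2 : ℝ) ^ (-(d : ℤ)) + (2 : ℝ) ^ (-(d : ℤ))) ≤ 1 := by
    rw [zpow_neg, zpow_natCast, ← two_mul, mul_left_comm, ← mul_assoc]
    exact mul_inv_le_one_of_le₀ (two_mul_sqrt_le_two_pow d) (by positivity)
  intro ξ hξ
  have h := gprof_mul_pderiv_fprof_fourier_support_general d hd φ.differentiable φ.integrable
    (SchwartzMap.derivCLM ℝ ℝ φ).integrable hball s n hξ
  obtain ⟨hl, hr⟩ := abs_le.1 (h.trans hradius)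
  exact ⟨by linarith, by linarith⟩
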